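/- Let α : (0,1) → ℝ be locally integrable with ∫_0^1 r |α(r)|² dr < ∞, and suppose that for every smooth compactly supported χ̃ ∈ C_c^∞(0,1) one has ∫_0^1 (1/r)(r² χ̃''(r) + r χ̃'(r) - κ² χ̃(r)) α(r) dr = 0 for a fixed κ ≥ 1. Then α(r) = a r^κ for some constant a, i.e. the solution branch r^{-κ} is excluded. -/

import Mathlib

open MeasureTheory

/-!
With `L χ = (r² χ'' + r χ' - κ² χ) / r`, a test function `φ` on an interval of `(0, ∞)` is of the
form `L χ` for a test function `χ` as soon as it is orthogonal to both `r ^ κ` and `r ^ (-κ)`: the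
primitives of `r ^ (-κ) φ` and `r ^ κ φ` are then compactly supported, and variation of constants
builds `χ` from them. Hence `α` annihilates every test function which these two powers annihilate,
and as only finitely many linear forms are involved, `α` is a combination of the two powers.
Finally `r ^ (-κ)` is not square integrable for `r dr` near `0` when `κ ≥ 1`.
-/

open Set TopologicalSpace
open scoped ContDiff Distributions

namespace EulerODE

section LinearAlgebra

variable {K V V' W ι : Type*} [DivisionRing K] [AddCommGroup V] [Module K V] [AddCommGroup V']
  [Module K V'] [AddCommGroup W] [Module K W]

theorem exists_comp_eq_of_ker_le_ker {f : V →ₗ[K] V'} {T : V →ₗ[K] W} (h : f.ker ≤ T.ker) :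
    ∃ S : V' →ₗ[K] W, S ∘ₗ f = T := by
  obtain ⟨S, hS⟩ :=
    LinearMap.exists_extend (f.ker.liftQ T h ∘ₗ f.quotKerEquivRange.symm.toLinearMap)
  refine ⟨S, LinearMap.ext fun v => ?_⟩
  have hv := LinearMap.congr_fun hS ⟨f v, v, rfl⟩
  have hmk : f.quotKerEquivRange.symm ⟨f v, v, rfl⟩ = f.ker.mkQ v :=
    f.quotKerEquivRange_symm_apply_image v ⟨v, rfl⟩
  simpa [hmk] using hv

theorem exists_sum_smul_of_iInf_ker_le_ker [Fintype ι] {L : ι → V →ₗ[K] K} {T : V →ₗ[K] W}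
    (h : ⨅ i, (L i).ker ≤ T.ker) : ∃ c : ι → W, ∀ v, T v = ∑ i, L i v • c i := by
  classical
  obtain ⟨S, rfl⟩ := exists_comp_eq_of_ker_le_ker (f := LinearMap.pi L) (T := T)
    (by rwa [LinearMap.ker_pi])
  exact ⟨fun i => S fun j => if i = j then 1 else 0, fun v =>
    S.pi_apply_eq_sum_univ (LinearMap.pi L v)⟩

end LinearAlgebra

section TestFunctions

variable {E F : Type*} [NormedAddCommGroup E] [NormedSpace ℝ E] [NormedAddCommGroup F]
  [NormedSpace ℝ F]

section FundamentalLemma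

variable [FiniteDimensional ℝ E] [MeasurableSpace E] [BorelSpace E] [CompleteSpace F]
  {Ω : Opens E} {μ : Measure E} {f : E → F}

theorem ae_eq_of_forall_testFunction {g : E → F} (hf : LocallyIntegrableOn f Ω μ)
    (hg : LocallyIntegrableOn g Ω μ)
    (h : ∀ φ : 𝓓(Ω, ℝ), ∫ x, φ x • f x ∂μ = ∫ x, φ x • g x ∂μ) :
    ∀ᵐ x ∂μ, x ∈ Ω → f x = g x := by
  have hzero := Ω.isOpen.ae_eq_zero_of_integral_contDiff_smul_eq_zero (hf.sub hg)
    fun φ hφ hφc hφΩ => by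
      let ψ : 𝓓(Ω, ℝ) := ⟨φ, hφ, hφc, hφΩ⟩
      have hψ {u : E → F} (hu : LocallyIntegrableOn u Ω μ) : Integrable (fun x => φ x • u x) μ :=
        ψ.integrable_bilin (ContinuousLinearMap.lsmul ℝ ℝ) hu
      simp only [Pi.sub_apply, smul_sub]
      rw [integral_sub (hψ hf) (hψ hg), sub_eq_zero]
      exact h ψ
  filter_upwards [hzero] with x hx hxΩ using sub_eq_zero.1 (hx hxΩ)

theorem ae_eq_sum_smul_of_forall_testFunction {ι : Type*} [Fintype ι] {g : ι → E → ℝ}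
    (hg : ∀ i, LocallyIntegrableOn (g i) Ω μ) (hf : LocallyIntegrableOn f Ω μ)
    (h : ∀ φ : 𝓓(Ω, ℝ), (∀ i, ∫ x, φ x * g i x ∂μ = 0) → ∫ x, φ x • f x ∂μ = 0) :
    ∃ c : ι → F, ∀ᵐ x ∂μ, x ∈ Ω → f x = ∑ i, g i x • c i := by
  let L (i : ι) : 𝓓(Ω, ℝ) →ₗ[ℝ] ℝ :=
    (TestFunction.integralAgainstBilinCLM (ContinuousLinearMap.mul ℝ ℝ) μ (g i)).toLinearMap
  let T : 𝓓(Ω, ℝ) →ₗ[ℝ] F :=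
    (TestFunction.integralAgainstBilinCLM (ContinuousLinearMap.lsmul ℝ ℝ) μ f).toLinearMap
  have hL (i : ι) (φ : 𝓓(Ω, ℝ)) : L i φ = ∫ x, φ x * g i x ∂μ :=
    TestFunction.integralAgainstBilinCLM_eq_integral (hg i)
  have hT (φ : 𝓓(Ω, ℝ)) : T φ = ∫ x, φ x • f x ∂μ :=
    TestFunction.integralAgainstBilinCLM_eq_integral hf
  obtain ⟨c, hc⟩ := exists_sum_smul_of_iInf_ker_le_ker (L := L) (T := T) fun φ hφ => by
    simp only [Submodule.mem_iInf, LinearMap.mem_ker, hL, hT] at hφ ⊢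
    exact h φ hφ
  have hgc (i : ι) : LocallyIntegrableOn (fun x => g i x • c i) Ω μ := fun x hx =>
    let ⟨s, hs, hint⟩ := hg i x hx
    ⟨s, hs, hint.smul_const (c i)⟩
  have hsum : LocallyIntegrableOn (fun x => ∑ i, g i x • c i) Ω μ := by
    simpa only [Finset.sum_fn] using Finset.sum_induction _ (LocallyIntegrableOn · Ω μ)
      (fun _ _ => .add) locallyIntegrableOn_zero fun i _ => hgc i
  refine ⟨c, ae_eq_of_forall_testFunction hf hsum fun φ => ?_⟩
  calc ∫ x, φ x • f x ∂μ = ∑ i, (∫ x, φ x * g i x ∂μ) • c i := by simpa only [hL, hT] using hc φ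
    _ = ∑ i, ∫ x, φ x • g i x • c i ∂μ := by simp only [← integral_smul_const, mul_smul]
    _ = ∫ x, φ x • ∑ i, g i x • c i ∂μ := by
      simp only [Finset.smul_sum]
      exact (integral_finsetSum _ fun i _ =>
        φ.integrable_bilin (ContinuousLinearMap.lsmul ℝ ℝ) (hgc i)).symm

end FundamentalLemma

/-- The test function `g φ`, for `g` smooth on `Ω` only: its values outside of `Ω`, where `φ`
vanishes, are irrelevant. -/
def smulTestFunction {Ω : Opens E} {n : ℕ∞} (g : E → ℝ) (hg : ContDiffOn ℝ n g Ω)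
    (φ : 𝓓^{n}(Ω, F)) : 𝓓^{n}(Ω, F) where
  toFun x := g x • φ x
  contDiff' := contMDiff_iff_contDiff.1 <| contMDiff_of_tsupport fun x hx =>
    have hxΩ : x ∈ Ω := φ.tsupport_subset (tsupport_smul_subset_right _ _ hx)
    ((hg.contDiffAt (Ω.isOpen.mem_nhds hxΩ)).smul φ.contDiff.contDiffAt).contMDiffAt
  hasCompactSupport' := φ.hasCompactSupport.smul_left
  tsupport_subset' := (tsupport_smul_subset_right _ _).trans φ.tsupport_subset

theorem exists_Icc_subset_of_isCompact {s K : Set ℝ} (hs : s.OrdConnected) (hK : IsCompact K)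
    (hKs : K ⊆ s) : ∃ a b, K ⊆ Icc a b ∧ Icc a b ⊆ s := by
  rcases K.eq_empty_or_nonempty with rfl | hne
  · exact ⟨1, 0, empty_subset _, by simp⟩
  · obtain ⟨a, ha⟩ := hK.exists_isLeast hne
    obtain ⟨b, hb⟩ := hK.exists_isGreatest hne
    exact ⟨a, b, fun x hx => ⟨ha.2 hx, hb.2 hx⟩, hs.out (hKs ha.1) (hKs hb.1)⟩

theorem hasDerivAt_integral_Iic [CompleteSpace F] {f : ℝ → F} (hf : Continuous f)
    (hfi : Integrable f) (x : ℝ) : HasDerivAt (fun x => ∫ t in Iic x, f t) (f x) x := by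
  have hsplit : (fun x => ∫ t in Iic x, f t) =
      fun x => (∫ t in (0 : ℝ)..x, f t) + ∫ t in Iic 0, f t := by
    funext x
    rw [← intervalIntegral.integral_Iic_sub_Iic hfi.integrableOn hfi.integrableOn, sub_add_cancel]
  rw [hsplit]
  exact (hf.integral_hasStrictDerivAt 0 x).hasDerivAt.add_const _

theorem exists_testFunction_hasDerivAt [CompleteSpace F] {Ω : Opens ℝ}
    (hΩ : (Ω : Set ℝ).OrdConnected) (φ : 𝓓(Ω, F)) (hφ : ∫ x, φ x = 0) :
    ∃ ψ : 𝓓(Ω, F), ∀ x, HasDerivAt ψ (φ x) x := by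
  obtain ⟨a, b, hab, habΩ⟩ :=
    exists_Icc_subset_of_isCompact hΩ φ.hasCompactSupport φ.tsupport_subset
  have hφ0 : ∀ x ∉ Icc a b, φ x = 0 := fun x hx =>
    image_eq_zero_of_notMem_tsupport (notMem_subset hab hx)
  have hderiv := hasDerivAt_integral_Iic φ.continuous
    (φ.continuous.integrable_of_hasCompactSupport φ.hasCompactSupport)
  have hψ0 : ∀ x ∉ Icc a b, ∫ t in Iic x, φ t = 0 := by
    intro x hx
    rcases lt_or_ge x a with hxa | hxa
    · exact setIntegral_eq_zero_of_forall_eq_zero fun t ht =>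
        hφ0 t fun hmem => (ht.trans_lt hxa).not_ge hmem.1
    · have hbx : b < x := not_le.1 fun hxb => hx ⟨hxa, hxb⟩
      have hright : ∀ t ∉ Iic x, φ t = 0 := fun t ht =>
        hφ0 t fun hmem => ht (hmem.2.trans hbx.le)
      rw [setIntegral_eq_integral_of_forall_compl_eq_zero hright, hφ]
  refine ⟨⟨fun x => ∫ t in Iic x, φ t, ?_, .intro isCompact_Icc hψ0, ?_⟩, hderiv⟩
  · refine contDiff_infty_iff_deriv.2 ⟨fun x => (hderiv x).differentiableAt, ?_⟩
    simpa only [funext fun x => (hderiv x).deriv] using φ.contDiff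
  · exact (closure_minimal (fun x hx => not_not.1 (mt (hψ0 x) hx)) isClosed_Icc).trans habΩ

end TestFunctions

section EulerOperator

/-- The Euler operator `χ ↦ (r² χ'' + r χ' - κ² χ) / r` to which the equation `r (r α')' = κ² α`
is transposed. -/
noncomputable def eulerOperator (κ : ℝ) (χ : ℝ → ℝ) (r : ℝ) : ℝ :=
  (1 / r) * (r ^ 2 * deriv (deriv χ) r + r * deriv χ r - κ ^ 2 * χ r)

/-- The solution `χ` of `eulerOperator κ χ = φ` given by variation of constants, where `U` and `V`
are primitives of `r ^ (-κ) * φ` and `r ^ κ * φ`. -/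
noncomputable def variationOfConstants (κ : ℝ) (U V : ℝ → ℝ) (r : ℝ) : ℝ :=
  (2 * κ)⁻¹ * (r ^ κ * U r - r ^ (-κ) * V r)

variable {κ r : ℝ} {U V φ : ℝ → ℝ}

theorem hasDerivAt_variationOfConstants (hκ : κ ≠ 0) (hr : 0 < r)
    (hU : HasDerivAt U (r ^ (-κ) * φ r) r) (hV : HasDerivAt V (r ^ κ * φ r) r) :
    HasDerivAt (variationOfConstants κ U V)
      (2⁻¹ * (r ^ (κ - 1) * U r + r ^ (-κ - 1) * V r)) r := by
  have hpow (s : ℝ) : HasDerivAt (fun r : ℝ => r ^ s) (s * r ^ (s - 1)) r :=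
    Real.hasDerivAt_rpow_const (.inl hr.ne')
  refine ((((hpow κ).mul hU).sub ((hpow (-κ)).mul hV)).const_mul (2 * κ)⁻¹).congr_deriv ?_
  field_simp
  ring

theorem eulerOperator_variationOfConstants (hκ : κ ≠ 0)
    (hU : ∀ r, 0 < r → HasDerivAt U (r ^ (-κ) * φ r) r)
    (hV : ∀ r, 0 < r → HasDerivAt V (r ^ κ * φ r) r) (hr : 0 < r) :
    eulerOperator κ (variationOfConstants κ U V) r = φ r := by
  have hfirst (s : ℝ) (hs : 0 < s) := hasDerivAt_variationOfConstants hκ hs (hU s hs) (hV s hs)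
  have hpow (s : ℝ) : HasDerivAt (fun r : ℝ => r ^ s) (s * r ^ (s - 1)) r :=
    Real.hasDerivAt_rpow_const (.inl hr.ne')
  have hsecond := ((((hpow (κ - 1)).mul (hU r hr)).add
    ((hpow (-κ - 1)).mul (hV r hr))).const_mul 2⁻¹).congr_of_eventuallyEq
      ((lt_mem_nhds hr).mono fun s hs => (hfirst s hs).deriv)
  have hP : r ^ κ ≠ 0 := (Real.rpow_pos_of_pos hr κ).ne'
  rw [eulerOperator, hsecond.deriv, (hfirst r hr).deriv, variationOfConstants]
  simp only [Real.rpow_sub_one hr.ne', Real.rpow_neg hr.le]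
  field_simp
  ring

end EulerOperator

section WeakSolutions

variable {F : Type*} [NormedAddCommGroup F] [NormedSpace ℝ F] {Ω : Opens ℝ} {κ : ℝ}

theorem contDiffOn_rpow_const (hpos : (Ω : Set ℝ) ⊆ Ioi 0) (s : ℝ) {n : WithTop ℕ∞} :
    ContDiffOn ℝ n (fun r : ℝ => r ^ s) Ω := fun _ hr =>
  (Real.contDiffAt_rpow_const_of_ne (hpos hr).ne').contDiffWithinAt

theorem exists_testFunction_eulerOperator_eq (hΩ : (Ω : Set ℝ).OrdConnected)
    (hpos : (Ω : Set ℝ) ⊆ Ioi 0) (hκ : κ ≠ 0) (φ : 𝓓(Ω, ℝ)) (hφ : ∫ r, φ r * r ^ κ = 0)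
    (hφ' : ∫ r, φ r * r ^ (-κ) = 0) :
    ∃ χ : 𝓓(Ω, ℝ), ∀ r, 0 < r → eulerOperator κ χ r = φ r := by
  let mulPow (s : ℝ) : 𝓓(Ω, ℝ) → 𝓓(Ω, ℝ) := smulTestFunction _ (contDiffOn_rpow_const hpos s)
  obtain ⟨U, hU⟩ := exists_testFunction_hasDerivAt hΩ (mulPow (-κ) φ)
    ((integral_congr_ae (.of_forall fun _ => mul_comm _ _)).trans hφ')
  obtain ⟨V, hV⟩ := exists_testFunction_hasDerivAt hΩ (mulPow κ φ)
    ((integral_congr_ae (.of_forall fun _ => mul_comm _ _)).trans hφ)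
  exact ⟨(2 * κ)⁻¹ • (mulPow κ U - mulPow (-κ) V), fun r hr =>
    eulerOperator_variationOfConstants hκ (fun r _ => hU r) (fun r _ => hV r) hr⟩

/-- `α` solves `r (r α')' = κ² α` on `Ω` in the sense of distributions with respect to `dr / r`,
that is, all derivatives are moved to the test function. -/
def IsWeakEulerSolution (κ : ℝ) (Ω : Opens ℝ) (α : ℝ → F) : Prop :=
  ∀ χ : 𝓓(Ω, ℝ), ∫ r in (Ω : Set ℝ), eulerOperator κ χ r • α r = 0

variable {α : ℝ → F}

theorem IsWeakEulerSolution.ae_eq_rpow_smul_add [CompleteSpace F]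
    (hα : IsWeakEulerSolution κ Ω α) (hΩ : (Ω : Set ℝ).OrdConnected)
    (hpos : (Ω : Set ℝ) ⊆ Ioi 0) (hκ : κ ≠ 0) (hloc : LocallyIntegrableOn α Ω) :
    ∃ a b : F, ∀ᵐ r ∂volume.restrict (Ω : Set ℝ), α r = r ^ κ • a + r ^ (-κ) • b := by
  have hpow (s : ℝ) : LocallyIntegrableOn (fun r : ℝ => r ^ s) (Ω : Set ℝ) :=
    (contDiffOn_rpow_const hpos s (n := 0)).continuousOn.locallyIntegrableOn
      Ω.isOpen.measurableSet
  obtain ⟨c, hc⟩ := ae_eq_sum_smul_of_forall_testFunction (g := ![(· ^ κ), (· ^ (-κ))])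
    (Fin.forall_fin_two.2 ⟨hpow κ, hpow (-κ)⟩) hloc fun φ hφ => by
      obtain ⟨χ, hχ⟩ :=
        exists_testFunction_eulerOperator_eq hΩ hpos hκ φ (hφ 0) (hφ 1)
      have hφ0 : ∀ r ∉ (Ω : Set ℝ), φ r • α r = 0 := fun r hr => by
        rw [image_eq_zero_of_notMem_tsupport (notMem_subset φ.tsupport_subset hr), zero_smul]
      rw [← hα χ, ← setIntegral_eq_integral_of_forall_compl_eq_zero hφ0]
      exact setIntegral_congr_fun Ω.isOpen.measurableSet fun r hr => by
        simp only [hχ r (hpos hr)]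
  refine ⟨c 0, c 1, (ae_restrict_iff' Ω.isOpen.measurableSet).2 ?_⟩
  simpa [Fin.sum_univ_two] using hc

theorem eq_zero_of_integrableOn_mul_norm_sq {R : ℝ} {a b : F} (hκ : 1 ≤ κ) (hR : 0 < R)
    (hα : ∀ᵐ r ∂volume.restrict (Ioo 0 R), α r = r ^ κ • a + r ^ (-κ) • b)
    (hint : IntegrableOn (fun r => r * ‖α r‖ ^ 2) (Ioo 0 R)) : b = 0 := by
  by_contra hb
  have hregular : IntegrableOn (fun r : ℝ => r * ‖r ^ κ • a‖ ^ 2) (Ioo 0 R) := by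
    have hcont : Continuous fun r : ℝ => r * ‖r ^ κ • a‖ ^ 2 := by
      have := Real.continuous_rpow_const (q := κ) (by linarith)
      fun_prop
    exact hcont.integrableOn_Icc.mono_set Ioo_subset_Icc_self
  have hbound : ∀ᵐ r ∂volume.restrict (Ioo 0 R),
      ‖r ^ (1 - 2 * κ)‖ ≤ (‖b‖ ^ 2)⁻¹ * (2 * (r * ‖α r‖ ^ 2 + r * ‖r ^ κ • a‖ ^ 2)) := by
    filter_upwards [hα, ae_restrict_mem measurableSet_Ioo] with r hαr hr
    have hr0 : 0 < r := hr.1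
    have hpow : r ^ (1 - 2 * κ) = r * (r ^ (-κ)) ^ 2 := by
      rw [← Real.rpow_mul_natCast hr0.le, ← Real.rpow_one_add' hr0.le] <;> grind
    have hpos : 0 < r ^ (-κ) := Real.rpow_pos_of_pos hr0 _
    have hnorm : r ^ (-κ) * ‖b‖ ≤ ‖α r‖ + ‖r ^ κ • a‖ := by
      calc r ^ (-κ) * ‖b‖ = ‖α r - r ^ κ • a‖ := by
            rw [hαr, add_sub_cancel_left, norm_smul, Real.norm_of_nonneg hpos.le]
        _ ≤ ‖α r‖ + ‖r ^ κ • a‖ := norm_sub_le _ _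
    rw [Real.norm_of_nonneg (Real.rpow_nonneg hr0.le _), le_inv_mul_iff₀ (by positivity)]
    calc ‖b‖ ^ 2 * r ^ (1 - 2 * κ) = r * (r ^ (-κ) * ‖b‖) ^ 2 := by rw [hpow]; ring
      _ ≤ r * (‖α r‖ + ‖r ^ κ • a‖) ^ 2 := by gcongr
      _ ≤ r * (2 * (‖α r‖ ^ 2 + ‖r ^ κ • a‖ ^ 2)) := by gcongr; exact add_sq_le
      _ = 2 * (r * ‖α r‖ ^ 2 + r * ‖r ^ κ • a‖ ^ 2) := by ring
  have hsingular : IntegrableOn (fun r : ℝ => r ^ (1 - 2 * κ)) (Ioo 0 R) :=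
    (((hint.add hregular).const_mul 2).const_mul _).mono' (by fun_prop) hbound
  have := (intervalIntegral.integrableOn_Ioo_rpow_iff hR).1 hsingular
  linarith

end WeakSolutions

end EulerODE

open EulerODE

theorem stmt_9_general {F : Type*} [NormedAddCommGroup F] [NormedSpace ℝ F] [CompleteSpace F]
    {κ R : ℝ} (hκ : 1 ≤ κ) (hR : 0 < R) {α : ℝ → F} (hloc : LocallyIntegrableOn α (Ioo 0 R))
    (hint : IntegrableOn (fun r => r * ‖α r‖ ^ 2) (Ioo 0 R))
    (hweak : IsWeakEulerSolution κ ⟨Ioo 0 R, isOpen_Ioo⟩ α) :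
    ∃ a : F, ∀ᵐ r ∂volume.restrict (Ioo 0 R), α r = r ^ κ • a := by
  obtain ⟨a, b, hab⟩ := hweak.ae_eq_rpow_smul_add ordConnected_Ioo Ioo_subset_Ioi_self
    (by positivity) hloc
  obtain rfl : b = 0 := eq_zero_of_integrableOn_mul_norm_sq hκ hR hab hint
  exact ⟨a, hab.mono fun r hr => by rw [hr, smul_zero, add_zero]⟩

/-- If `α` is locally integrable on `(0,1)` with `∫_0^1 r α(r)² dr < ∞`,
solves the Euler equation `r(rα')' = κ²α` weakly against all test functions supported in
`(0,1)`, and `κ ≥ 1`, then `α(r) = a r^κ` (a.e.); the branch `r^{-κ}` is excluded. -/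
theorem stmt_9 (κ : ℝ) (hκ : 1 ≤ κ) (α : ℝ → ℝ)
    (hloc : LocallyIntegrableOn α (Set.Ioo 0 1))
    (hint : IntegrableOn (fun r => r * (α r) ^ 2) (Set.Ioo 0 1))
    (hweak : ∀ χ : ℝ → ℝ, ContDiff ℝ (⊤ : ℕ∞) χ → HasCompactSupport χ →
      tsupport χ ⊆ Set.Ioo 0 1 →
      ∫ r in Set.Ioo (0 : ℝ) 1,
        (1/r) * (r ^ 2 * deriv (deriv χ) r + r * deriv χ r - κ ^ 2 * χ r) * α r = 0) :
    ∃ a : ℝ, ∀ᵐ r ∂(volume.restrict (Set.Ioo (0 : ℝ) 1)), α r = a * r ^ κ := by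
  obtain ⟨a, ha⟩ := stmt_9_general hκ one_pos hloc (by simpa only [Real.norm_eq_abs, sq_abs])
    fun χ => hweak χ χ.contDiff χ.hasCompactSupport χ.tsupport_subset
  exact ⟨a, by simpa only [smul_eq_mul, mul_comm] using ha⟩
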